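/- arXiv:cs/0010032 — 3 statements merged into one kernel-verified Lean document; each statement's English description precedes it below -/
import Mathlib

section
/- Let P be a finite super logic program with least static expansion \overline{P}. Then the sequence (P^n) is monotonically increasing, there is a natural number n0 with P^{n0} = P^{n0+1}, and P^{n0} = \overline{P} ∩ L*_not, i.e. the fixed point equals the restriction of the least static expansion of P to the language L*_not. -/
/-!
All theories that matter here are *default extensions* of the program `P`: they add to `P` only
a restriction on the default atoms. Minimality of a model compares interpretations with equal
default part, so a minimal model of a default extension is already a minimal model of every
weaker theory containing `P`. Hence minimal entailment is monotone along default extensions.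
This makes `P^n` increasing. It becomes stationary because `P^(n+1)` depends only on the set of
objective parts of minimal models of `P^n`, and these sets decrease inside a finite type.

The sequence stays inside every static expansion `X`, by induction: if `X` minimally entails
`¬E1 ∧ … ∧ ¬Em → ¬E0`, then `not (E0 ∧ ¬E1 ∧ … ∧ ¬Em)` belongs to `X`, and distributing `not`
over disjunctions gives `not E1 ∧ … ∧ not Em → not E0` (`derived_subset`).

For the converse let `Q` be the fixed point. The models of `Q` are made into a Kripke structure:
`I` sees the minimal models of `Q` that falsify every `E` with `not E` true in `I`, and `not F`
means that `F` fails in all worlds seen. Since `Q` is a fixed point and there are finitely many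
valuations, this reading agrees with the given truth value of each `not (p1 ∧ … ∧ pk)`
(`forall_sees_iff`). So each world still satisfies `P`, and the world of a minimal model of `Q`
describes a minimal model. Thus the default formulas valid in the structure form, together with
`P`, a pre-fixed point of the static expansion operator. This operator is monotone on default
extensions, so by Knaster–Tarski a static expansion lies below
(`exists_isStaticExpansion_subset`), and the least one does too. A formula of `L*_not` in the least
static expansion is therefore true in every model of `Q`, that is, it belongs to `Q`.
-/

/-- Formulas of the modal language `L_not` over the set `At` of objective atoms.
`not F` is the default negation atom for a formula `F` (arbitrary nesting allowed). -/
inductive Fml (At : Type) : Type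
  | atom : At → Fml At
  | tru : Fml At
  | fls : Fml At
  | neg : Fml At → Fml At
  | conj : Fml At → Fml At → Fml At
  | disj : Fml At → Fml At → Fml At
  | impl : Fml At → Fml At → Fml At
  | equiv : Fml At → Fml At → Fml At
  | not : Fml At → Fml At

/-- An interpretation of `L_not`: a truth value for every objective atom and for
every default atom `not F` (the latter treated as new propositional atoms). -/
structure Interp (At : Type) where
  obj : At → Prop
  dflt : Fml At → Prop

/-- Classical satisfaction of a formula by an interpretation. -/
def Interp.sat {At : Type} (I : Interp At) : Fml At → Prop
  | Fml.atom a => I.obj a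
  | Fml.tru => True
  | Fml.fls => False
  | Fml.neg F => ¬ Interp.sat I F
  | Fml.conj F G => Interp.sat I F ∧ Interp.sat I G
  | Fml.disj F G => Interp.sat I F ∨ Interp.sat I G
  | Fml.impl F G => Interp.sat I F → Interp.sat I G
  | Fml.equiv F G => (Interp.sat I F ↔ Interp.sat I G)
  | Fml.not F => I.dflt F

/-- `I` is a model of the theory `T`. -/
def Interp.satTheory {At : Type} (I : Interp At) (T : Set (Fml At)) : Prop :=
  ∀ F ∈ T, I.sat F

/-- A set `S` contains `T`, the axioms (CA) and (DA), and is closed under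
classical propositional consequence and the invariance rule (IR). -/
def CnClosed {At : Type} (T S : Set (Fml At)) : Prop :=
  T ⊆ S ∧
  Fml.not Fml.fls ∈ S ∧
  Fml.neg (Fml.not Fml.tru) ∈ S ∧
  (∀ F G : Fml At,
    Fml.equiv (Fml.not (Fml.disj F G)) (Fml.conj (Fml.not F) (Fml.not G)) ∈ S) ∧
  (∀ F : Fml At, (∀ I : Interp At, I.satTheory S → I.sat F) → F ∈ S) ∧
  (∀ F G : Fml At, Fml.equiv F G ∈ S → Fml.equiv (Fml.not F) (Fml.not G) ∈ S)

/-- `Cn_not(T)`: the smallest set of formulas containing `T`, the axioms (CA), (DA),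
closed under propositional consequence and the invariance rule (IR). -/
def CnNot {At : Type} (T : Set (Fml At)) : Set (Fml At) :=
  ⋂₀ {S | CnClosed T S}

/-- `M` is smaller than `N`: they agree on all default atoms and the objective atoms
true in `M` form a proper subset of those true in `N`. -/
def Smaller {At : Type} (M N : Interp At) : Prop :=
  M.dflt = N.dflt ∧ {a | M.obj a} ⊂ {a | N.obj a}

/-- `M` is a minimal model of `T`. -/
def IsMinModel {At : Type} (T : Set (Fml At)) (M : Interp At) : Prop :=
  M.satTheory T ∧ ∀ N : Interp At, N.satTheory T → ¬ Smaller N M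

/-- `T ⊨_min F`: `F` is true in all minimal models of `T`. -/
def MinEntails {At : Type} (T : Set (Fml At)) (F : Fml At) : Prop :=
  ∀ M : Interp At, IsMinModel T M → M.sat F

/-- `Td` is a static expansion of `T`. -/
def IsStaticExpansion {At : Type} (T Td : Set (Fml At)) : Prop :=
  Td = CnNot (T ∪ {G | ∃ F : Fml At, MinEntails Td (Fml.neg F) ∧ G = Fml.not F})

/-- `Tbar` is the least static expansion of `T`. -/
def IsLeastStaticExpansion {At : Type} (T Tbar : Set (Fml At)) : Prop :=
  IsStaticExpansion T Tbar ∧ ∀ Td : Set (Fml At), IsStaticExpansion T Td → Tbar ⊆ Td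

/-- A clause of a super logic program:
`A1 ∨ … ∨ Ak ← B1 ∧ … ∧ Bm ∧ not C1 ∧ … ∧ not Cn`, where the `Ai` (head) and
`Bi` (posBody) are objective atoms and the `Ci` (negBody) are finite
conjunctions of objective atoms. -/
structure Clause (At : Type) where
  head : List At
  posBody : List At
  negBody : List (List At)

/-- Valuations of the objective atoms (`Obj`). -/
abbrev ObjVal (At : Type) := At → Prop

/-- Valuations of the default atoms `not(p1 ∧ … ∧ pn)`, indexed by the list
`[p1, …, pn]` of atoms of the conjunction. -/
abbrev DefVal (At : Type) := List At → Prop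

/-- `Def`: the valuations of the default atoms making `not(true)`
(the empty conjunction case) false. -/
def DefSet (At : Type) : Set (DefVal At) := {d | ¬ d []}

/-- Satisfaction of a clause by a reduced interpretation `I_obj ∪ I_def`. -/
def satClause {At : Type} (Io : ObjVal At) (Id : DefVal At) (c : Clause At) : Prop :=
  ((∀ b ∈ c.posBody, Io b) ∧ (∀ C ∈ c.negBody, Id C)) → ∃ a ∈ c.head, Io a

/-- `I_obj ∪ I_def` is a model of the super program `P`. -/
def satProg {At : Type} (Io : ObjVal At) (Id : DefVal At) (P : Set (Clause At)) : Prop :=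
  ∀ c ∈ P, satClause Io Id c

/-- `I_obj ∪ I_def` is a minimal model of `P`: it is a model and no model with the
same default part has a strictly smaller set of true objective atoms. -/
def IsMinModelProg {At : Type} (P : Set (Clause At)) (Io : ObjVal At) (Id : DefVal At) : Prop :=
  satProg Io Id P ∧
  ∀ Io' : ObjVal At, satProg Io' Id P → ¬ ({a | Io' a} ⊂ {a | Io a})

/-- `I_def` is given by the set `O` of objective valuations:
`I_def ⊨ not(p1∧…∧pn)` iff every valuation in `O` satisfies `¬(p1∧…∧pn)`. -/
def givenBy {At : Type} (Id : DefVal At) (O : Set (ObjVal At)) : Prop :=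
  ∀ E : List At, Id E ↔ ∀ Io ∈ O, ∃ p ∈ E, ¬ Io p

/-- The operator `Φ_P`: objective parts of minimal models of `P` whose default part
belongs to `D`. -/
def PhiOp {At : Type} (P : Set (Clause At)) (D : Set (DefVal At)) : Set (ObjVal At) :=
  {Io | ∃ Id ∈ D, IsMinModelProg P Io Id}

/-- The operator `Ψ_P`: default valuations given by some nonempty subset of `O`
and extendable to a model of `P`. -/
def PsiOp {At : Type} (P : Set (Clause At)) (O : Set (ObjVal At)) : Set (DefVal At) :=
  {Id | Id ∈ DefSet At ∧
        (∃ O' ⊆ O, O'.Nonempty ∧ givenBy Id O') ∧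
        (∃ Io : ObjVal At, satProg Io Id P)}

/-- The operator `Λ_P := Ψ_P ∘ Φ_P`. -/
def LamOp {At : Type} (P : Set (Clause At)) : Set (DefVal At) → Set (DefVal At) :=
  PsiOp P ∘ PhiOp P

/-- The conjunction `p1 ∧ … ∧ pn` of a list of objective atoms
(the empty conjunction is `true`, a one-element list is just the atom). -/
def conjAtoms {At : Type} : List At → Fml At
  | [] => Fml.tru
  | [p] => Fml.atom p
  | p :: q :: ps => Fml.conj (Fml.atom p) (conjAtoms (q :: ps))

/-- Conjunction of a list of formulas. -/
def conjList {At : Type} : List (Fml At) → Fml At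
  | [] => Fml.tru
  | [F] => F
  | F :: G :: Gs => Fml.conj F (conjList (G :: Gs))

/-- Disjunction `p1 ∨ … ∨ pk` of a list of objective atoms (empty = `false`). -/
def disjAtoms {At : Type} : List At → Fml At
  | [] => Fml.fls
  | [p] => Fml.atom p
  | p :: q :: ps => Fml.disj (Fml.atom p) (disjAtoms (q :: ps))

/-- The default atom `not(p1 ∧ … ∧ pn)`, with `not(true)` (the case `n = 0`)
identified with `false`. -/
def notConj {At : Type} : List At → Fml At
  | [] => Fml.fls
  | p :: ps => Fml.not (conjAtoms (p :: ps))

/-- The formula of `L_not` corresponding to a program clause. -/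
def Clause.toFml {At : Type} (c : Clause At) : Fml At :=
  Fml.impl (conjList (c.posBody.map Fml.atom ++ c.negBody.map notConj))
    (disjAtoms c.head)

/-- The default part of the reduct of a full interpretation `I`:
its restriction to the default atoms `not(p1 ∧ … ∧ pn)`. -/
def reductDef {At : Type} (I : Interp At) : DefVal At :=
  fun E => I.dflt (conjAtoms E)

/-- `L*_not`: propositional formulas over the objective atoms and the default atoms
`not(p1 ∧ … ∧ pn)` with `n ≥ 1` (the atom `not(true)`, i.e. the case `n = 0`,
is identified with the constant `false`, which is available as `Fml.fls`). -/
inductive LStar {At : Type} : Fml At → Prop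
  | atom (a : At) : LStar (Fml.atom a)
  | tru : LStar Fml.tru
  | fls : LStar Fml.fls
  | dflt (p : At) (ps : List At) : LStar (Fml.not (conjAtoms (p :: ps)))
  | neg {F : Fml At} : LStar F → LStar (Fml.neg F)
  | conj {F G : Fml At} : LStar F → LStar G → LStar (Fml.conj F G)
  | disj {F G : Fml At} : LStar F → LStar G → LStar (Fml.disj F G)
  | impl {F G : Fml At} : LStar F → LStar G → LStar (Fml.impl F G)
  | equiv {F G : Fml At} : LStar F → LStar G → LStar (Fml.equiv F G)

/-- Classical propositional consequence within `L*_not`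
(default atoms treated as new propositional atoms). -/
def CnStar {At : Type} (S : Set (Fml At)) : Set (Fml At) :=
  {F | LStar F ∧ ∀ I : Interp At, I.satTheory S → I.sat F}

/-- One step of the fixed point construction:
`Cn(P ∪ {not E1 ∧ … ∧ not Em → not E0 : S ⊨_min ¬E1 ∧ … ∧ ¬Em → ¬E0})`,
where the `Ei` range over conjunctions of objective atoms, `E0` may be the empty
conjunction `true`, and `not(true)` is identified with `false`. -/
def PStep {At : Type} (P0 S : Set (Fml At)) : Set (Fml At) :=
  CnStar (P0 ∪
    {F | ∃ (Es : List (List At)) (E0 : List At),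
      F = Fml.impl (conjList (Es.map notConj)) (notConj E0) ∧
      MinEntails S
        (Fml.impl (conjList (Es.map (fun E => Fml.neg (conjAtoms E))))
          (Fml.neg (conjAtoms E0)))})

/-- The sequence `P^0 = P`, `P^{n+1} = PStep P (P^n)`. -/
def PSeq {At : Type} (P : Set (Clause At)) : ℕ → Set (Fml At)
  | 0 => Clause.toFml '' P
  | n + 1 => PStep (Clause.toFml '' P) (PSeq P n)

section Semantics

/-! ### Default extensions and minimal entailment -/

variable {At : Type}

/-- Classical propositional consequences of a theory in the full language `L_not`. -/
def Csq (S : Set (Fml At)) : Set (Fml At) :=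
  {F | ∀ I : Interp At, I.satTheory S → I.sat F}

/-- `F` is a default formula: its truth value depends on the default atoms only. This is the
semantic version of "no objective atom occurs in `F` outside the scope of `not`". -/
def IsDefault (F : Fml At) : Prop :=
  ∀ I J : Interp At, I.dflt = J.dflt → I.sat F → J.sat F

/-- `X` adds to the theory `T` only a restriction on the default atoms. -/
def DefaultExtension (T X : Set (Fml At)) : Prop :=
  T ⊆ X ∧ ∀ M N : Interp At, M.satTheory X → N.satTheory T → M.dflt = N.dflt → N.satTheory X

/-- Strengthening a theory by a restriction on the default atoms keeps minimal models
minimal, because minimality only compares interpretations with equal default part. -/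
theorem IsMinModel.of_subset {T X Y : Set (Fml At)} (hT : T ⊆ X) (hXY : X ⊆ Y)
    (hY : DefaultExtension T Y) {M : Interp At} (hM : IsMinModel Y M) : IsMinModel X M :=
  ⟨fun F hF => hM.1 F (hXY hF), fun N hN hs =>
    hM.2 N (hY.2 M N hM.1 (fun F hF => hN F (hT hF)) hs.1.symm) hs⟩

theorem MinEntails.mono {T X Y : Set (Fml At)} (hT : T ⊆ X) (hXY : X ⊆ Y)
    (hY : DefaultExtension T Y) {F : Fml At} (h : MinEntails X F) : MinEntails Y F :=
  fun M hM => h M (hM.of_subset hT hXY hY)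

theorem subset_csq (S : Set (Fml At)) : S ⊆ Csq S := fun F hF _ hI => hI F hF

theorem satTheory_csq {S : Set (Fml At)} {I : Interp At} :
    I.satTheory (Csq S) ↔ I.satTheory S :=
  ⟨fun h F hF => h F (subset_csq S hF), fun h _ hF => hF I h⟩

theorem csq_mono {S S' : Set (Fml At)} (h : S ⊆ S') : Csq S ⊆ Csq S' :=
  fun _ hF I hI => hF I (fun G hG => hI G (h hG))

theorem isDefault_not (F : Fml At) : IsDefault (Fml.not F) := by
  intro I J h hI
  simpa only [Interp.sat, h] using hI

theorem IsDefault.neg {F : Fml At} (hF : IsDefault F) : IsDefault (Fml.neg F) :=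
  fun I J h hI hJ => hI (hF J I h.symm hJ)

theorem IsDefault.conj {F G : Fml At} (hF : IsDefault F) (hG : IsDefault G) :
    IsDefault (Fml.conj F G) :=
  fun I J h hI => ⟨hF I J h hI.1, hG I J h hI.2⟩

theorem IsDefault.impl {F G : Fml At} (hF : IsDefault F) (hG : IsDefault G) :
    IsDefault (Fml.impl F G) :=
  fun I J h hI hJ => hG I J h (hI (hF J I h.symm hJ))

theorem IsDefault.equiv {F G : Fml At} (hF : IsDefault F) (hG : IsDefault G) :
    IsDefault (Fml.equiv F G) :=
  fun I J h hI => ⟨fun hJ => hG I J h (hI.1 (hF J I h.symm hJ)),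
    fun hJ => hF I J h (hI.2 (hG J I h.symm hJ))⟩

theorem defaultExtension_csq {T D : Set (Fml At)} (hD : ∀ F ∈ D, IsDefault F) :
    DefaultExtension T (Csq (T ∪ D)) := by
  refine ⟨fun F hF => subset_csq _ (Or.inl hF), fun M N hM hN h => satTheory_csq.2 ?_⟩
  rintro F (hF | hF)
  · exact hN F hF
  · exact hD F hF M N h (hM F (subset_csq _ (Or.inr hF)))

/-! ### The closure `CnNot` and static expansions -/

theorem cnClosed_cnNot (T : Set (Fml At)) : CnClosed T (CnNot T) := by
  refine ⟨fun F hF S hS => hS.1 hF, fun S hS => hS.2.1, fun S hS => hS.2.2.1,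
    fun F G S hS => hS.2.2.2.1 F G, fun F hF S hS => hS.2.2.2.2.1 F fun I hI =>
      hF I fun G hG => hI G (hG S hS), fun F G h S hS => hS.2.2.2.2.2 F G (h S hS)⟩

theorem cnNot_subset {T S : Set (Fml At)} (h : CnClosed T S) : CnNot T ⊆ S :=
  fun _ hF => hF S h

theorem cnNot_mono {T T' : Set (Fml At)} (h : T ⊆ T') : CnNot T ⊆ CnNot T' :=
  cnNot_subset ⟨h.trans (cnClosed_cnNot T').1, (cnClosed_cnNot T').2⟩

/-- The axioms and the conclusions of the invariance rule are default formulas. So if a set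
`S` closed under these is cut down to `T` and its default formulas, the consequences of what
remains are still closed under them. -/
theorem cnClosed_csq {T A S : Set (Fml At)} (hA : ∀ F ∈ A, IsDefault F) (hAS : A ⊆ S)
    (hf : Fml.not Fml.fls ∈ S) (ht : Fml.neg (Fml.not Fml.tru) ∈ S)
    (hd : ∀ F G : Fml At,
      Fml.equiv (Fml.not (Fml.disj F G)) (Fml.conj (Fml.not F) (Fml.not G)) ∈ S)
    (hi : ∀ F G : Fml At, Fml.equiv F G ∈ S → Fml.equiv (Fml.not F) (Fml.not G) ∈ S)
    (hS : Csq (T ∪ {F | IsDefault F ∧ F ∈ S}) ⊆ S) :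
    CnClosed (T ∪ A) (Csq (T ∪ {F | IsDefault F ∧ F ∈ S})) := by
  have key : ∀ F, IsDefault F → F ∈ S → F ∈ Csq (T ∪ {F | IsDefault F ∧ F ∈ S}) :=
    fun F h1 h2 => subset_csq _ (Or.inr ⟨h1, h2⟩)
  refine ⟨?_, key _ (isDefault_not _) hf, key _ (isDefault_not _).neg ht,
    fun F G => key _ ((isDefault_not _).equiv ((isDefault_not _).conj (isDefault_not _))) (hd F G),
    fun F hF I hI => hF I (satTheory_csq.2 hI),
    fun F G h => key _ ((isDefault_not _).equiv (isDefault_not _)) (hi F G (hS h))⟩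
  rintro F (hF | hF)
  · exact subset_csq _ (Or.inl hF)
  · exact key F (hA F hF) (hAS hF)

/-- `CnNot (T ∪ A)` is axiomatized over `T` by its default formulas. -/
theorem cnNot_eq_csq {T A : Set (Fml At)} (hA : ∀ F ∈ A, IsDefault F) :
    CnNot (T ∪ A) = Csq (T ∪ {F | IsDefault F ∧ F ∈ CnNot (T ∪ A)}) := by
  obtain ⟨h1, h2, h3, h4, h5, h6⟩ := cnClosed_cnNot (T ∪ A)
  have hS : Csq (T ∪ {F | IsDefault F ∧ F ∈ CnNot (T ∪ A)}) ⊆ CnNot (T ∪ A) := by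
    intro F hF
    refine h5 F fun I hI => hF I ?_
    rintro G (hG | hG)
    · exact hI G (h1 (Or.inl hG))
    · exact hI G hG.2
  exact (cnNot_subset (cnClosed_csq hA (fun F hF => h1 (Or.inr hF)) h2 h3 h4 h6 hS)).antisymm hS

/-- The default atoms `not F` assumed by the closed world reasoning of `X`. -/
def assumed (X : Set (Fml At)) : Set (Fml At) :=
  {G | ∃ F : Fml At, MinEntails X (Fml.neg F) ∧ G = Fml.not F}

theorem isDefault_of_mem_assumed (X : Set (Fml At)) : ∀ F ∈ assumed X, IsDefault F := by
  rintro _ ⟨F, -, rfl⟩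
  exact isDefault_not F

theorem defaultExtension_cnNot (T X : Set (Fml At)) :
    DefaultExtension T (CnNot (T ∪ assumed X)) := by
  rw [cnNot_eq_csq (isDefault_of_mem_assumed X)]
  exact defaultExtension_csq fun F hF => hF.1

theorem assumed_mono {T X Y : Set (Fml At)} (hT : T ⊆ X) (hXY : X ⊆ Y)
    (hY : DefaultExtension T Y) : assumed X ⊆ assumed Y := by
  rintro _ ⟨F, hF, rfl⟩
  exact ⟨F, hF.mono hT hXY hY, rfl⟩

/-- A Knaster–Tarski principle: below every pre-fixed point of the form
`Csq (T ∪ default formulas)` of the static expansion operator there is a static expansion.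
On theories of this form the operator is monotone, although minimal entailment is not. -/
theorem exists_isStaticExpansion_subset {T Z : Set (Fml At)} (hZ : ∀ F ∈ Z, IsDefault F)
    (h : CnNot (T ∪ assumed (Csq (T ∪ Z))) ⊆ Csq (T ∪ Z))
    (hZ' : ∀ F ∈ Csq (T ∪ Z), IsDefault F → F ∈ Z) :
    ∃ Y, IsStaticExpansion T Y ∧ Y ⊆ Csq (T ∪ Z) := by
  let C : Set (Fml At) → Set (Fml At) := fun L => Csq (T ∪ {F | IsDefault F ∧ F ∈ L})
  have hC : ∀ L, DefaultExtension T (C L) := fun L => defaultExtension_csq fun F hF => hF.1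
  have hCm : Monotone C := fun L L' hL =>
    csq_mono (Set.union_subset_union_right _ fun F hF => ⟨hF.1, hL hF.2⟩)
  let f : Set (Fml At) →o Set (Fml At) :=
    ⟨fun L => CnNot (T ∪ assumed (C L)), fun L L' hL =>
      cnNot_mono (Set.union_subset_union_right _
        (assumed_mono (hC L).1 (hCm hL) (hC L')))⟩
  have hfix : f (OrderHom.lfp f) = OrderHom.lfp f := f.map_lfp
  have hCL : C (OrderHom.lfp f) = OrderHom.lfp f := by
    conv_rhs => rw [← hfix]
    change _ = CnNot (T ∪ assumed (C (OrderHom.lfp f)))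
    rw [cnNot_eq_csq (isDefault_of_mem_assumed _)]
    change _ = C (f (OrderHom.lfp f))
    rw [hfix]
  have hCZ : C (Csq (T ∪ Z)) = Csq (T ∪ Z) := by
    refine Set.Subset.antisymm ?_ ?_
    · exact csq_mono (Set.union_subset_union_right _ fun F hF => hZ' F hF.2 hF.1)
    · exact csq_mono (Set.union_subset_union_right _ fun F hF =>
        ⟨hZ F hF, subset_csq _ (Or.inr hF)⟩)
  refine ⟨OrderHom.lfp f, ?_, f.lfp_le ?_⟩
  · change _ = CnNot (T ∪ assumed (OrderHom.lfp f))
    conv_lhs => rw [← hfix]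
    change CnNot (T ∪ assumed (C (OrderHom.lfp f))) = _
    rw [hCL]
  · change CnNot (T ∪ assumed (C (Csq (T ∪ Z)))) ⊆ _
    rw [hCZ]
    exact h

/-! ### The sequence `PSeq` -/

theorem sat_conjList {I : Interp At} : ∀ {Fs : List (Fml At)},
    I.sat (conjList Fs) ↔ ∀ F ∈ Fs, I.sat F
  | [] => by simp [conjList, Interp.sat]
  | [F] => by simp [conjList]
  | F :: G :: Gs => by
    have := sat_conjList (I := I) (Fs := G :: Gs)
    simp only [conjList, Interp.sat, this, List.forall_mem_cons]

theorem lStar_conjList : ∀ {Fs : List (Fml At)}, (∀ F ∈ Fs, LStar F) → LStar (conjList Fs)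
  | [], _ => LStar.tru
  | [F], h => h F (by simp)
  | F :: G :: Gs, h => (h F (by simp)).conj (lStar_conjList fun H hH => h H (by simp_all))

theorem lStar_disjAtoms : ∀ ps : List At, LStar (disjAtoms ps)
  | [] => LStar.fls
  | [p] => LStar.atom p
  | p :: q :: ps => (LStar.atom p).disj (lStar_disjAtoms (q :: ps))

theorem lStar_notConj : ∀ E : List At, LStar (notConj E)
  | [] => LStar.fls
  | p :: ps => LStar.dflt p ps

theorem isDefault_notConj : ∀ E : List At, IsDefault (notConj E)
  | [] => fun _ _ _ h => h
  | _ :: _ => isDefault_not _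

theorem isDefault_conjList {Fs : List (Fml At)} (h : ∀ F ∈ Fs, IsDefault F) :
    IsDefault (conjList Fs) := by
  intro I J hIJ hI
  rw [sat_conjList] at *
  exact fun F hF => h F hF I J hIJ (hI F hF)

theorem lStar_toFml (c : Clause At) : LStar c.toFml := by
  refine (lStar_conjList fun F hF => ?_).impl (lStar_disjAtoms _)
  simp only [List.mem_append, List.mem_map] at hF
  rcases hF with ⟨a, -, rfl⟩ | ⟨E, -, rfl⟩
  · exact LStar.atom a
  · exact lStar_notConj E

/-- On `L*_not` an interpretation only matters through its objective part and the values of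
`notConj E`. -/
theorem LStar.sat_congr {I J : Interp At} (ho : ∀ a, I.obj a ↔ J.obj a)
    (hd : ∀ E, I.sat (notConj E) ↔ J.sat (notConj E)) {F : Fml At} (hF : LStar F) :
    I.sat F ↔ J.sat F := by
  induction hF with
  | atom a => exact ho a
  | tru => exact Iff.rfl
  | fls => exact Iff.rfl
  | dflt p ps => exact hd (p :: ps)
  | neg _ ih => simp only [Interp.sat, ih]
  | conj _ _ ih1 ih2 => simp only [Interp.sat, ih1, ih2]
  | disj _ _ ih1 ih2 => simp only [Interp.sat, ih1, ih2]
  | impl _ _ ih1 ih2 => simp only [Interp.sat, ih1, ih2]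
  | equiv _ _ ih1 ih2 => simp only [Interp.sat, ih1, ih2]

theorem sat_conjAtoms {I : Interp At} : ∀ {E : List At},
    I.sat (conjAtoms E) ↔ ∀ p ∈ E, I.obj p
  | [] => by simp [conjAtoms, Interp.sat]
  | [p] => by simp [conjAtoms, Interp.sat]
  | p :: q :: ps => by
    have := sat_conjAtoms (I := I) (E := q :: ps)
    simp only [conjAtoms, Interp.sat, this, List.forall_mem_cons]

/-- The formula `¬E1 ∧ … ∧ ¬Em → ¬E0`. -/
abbrev objImpl (Es : List (List At)) (E0 : List At) : Fml At :=
  Fml.impl (conjList (Es.map (fun E => Fml.neg (conjAtoms E)))) (Fml.neg (conjAtoms E0))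

theorem sat_objImpl {I : Interp At} {Es : List (List At)} {E0 : List At} :
    I.sat (objImpl Es E0) ↔
      ((∀ E ∈ Es, ¬ I.sat (conjAtoms E)) → ¬ I.sat (conjAtoms E0)) := by
  simp [Interp.sat, sat_conjList]

/-- The formulas `not E1 ∧ … ∧ not Em → not E0` that one step adds to the program. -/
def derived (S : Set (Fml At)) : Set (Fml At) :=
  {F | ∃ (Es : List (List At)) (E0 : List At),
      F = Fml.impl (conjList (Es.map notConj)) (notConj E0) ∧ MinEntails S (objImpl Es E0)}

theorem pStep_eq (T S : Set (Fml At)) : PStep T S = CnStar (T ∪ derived S) := rfl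

theorem isDefault_of_mem_derived (S : Set (Fml At)) : ∀ F ∈ derived S, IsDefault F := by
  rintro _ ⟨Es, E0, rfl, -⟩
  refine (isDefault_conjList fun F hF => ?_).impl (isDefault_notConj E0)
  obtain ⟨E, -, rfl⟩ := List.mem_map.1 hF
  exact isDefault_notConj E

theorem lStar_of_mem_base (P : Set (Clause At)) (S : Set (Fml At)) :
    ∀ F ∈ Clause.toFml '' P ∪ derived S, LStar F := by
  rintro _ (⟨c, -, rfl⟩ | ⟨Es, E0, rfl, -⟩)
  · exact lStar_toFml c
  · refine (lStar_conjList fun F hF => ?_).impl (lStar_notConj E0)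
    obtain ⟨E, -, rfl⟩ := List.mem_map.1 hF
    exact lStar_notConj E

theorem base_subset_pStep (P : Set (Clause At)) (S : Set (Fml At)) :
    Clause.toFml '' P ∪ derived S ⊆ PStep (Clause.toFml '' P) S :=
  fun F hF => ⟨lStar_of_mem_base P S F hF, fun _ hI => hI F hF⟩

theorem satTheory_pStep {P : Set (Clause At)} {S : Set (Fml At)} {I : Interp At} :
    I.satTheory (PStep (Clause.toFml '' P) S) ↔
      I.satTheory (Clause.toFml '' P ∪ derived S) :=
  ⟨fun h F hF => h F (base_subset_pStep P S hF), fun h _ hF => hF.2 I h⟩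

theorem defaultExtension_pSeq (P : Set (Clause At)) :
    ∀ n, DefaultExtension (Clause.toFml '' P) (PSeq P n)
  | 0 => ⟨subset_rfl, fun _ _ _ h _ => h⟩
  | n + 1 => by
    refine ⟨fun F hF => base_subset_pStep P _ (Or.inl hF), fun M N hM hN h => ?_⟩
    refine satTheory_pStep.2 ?_
    rintro F (hF | hF)
    · exact hN F hF
    · exact isDefault_of_mem_derived _ F hF M N h (satTheory_pStep.1 hM F (Or.inr hF))

theorem pStep_mono {T S S' : Set (Fml At)} (h : derived S ⊆ derived S') :
    PStep T S ⊆ PStep T S' :=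
  fun _ hF => ⟨hF.1, fun I hI => hF.2 I fun G hG => hI G (Set.union_subset_union_right _ h hG)⟩

theorem pSeq_subset_succ (P : Set (Clause At)) : ∀ n, PSeq P n ⊆ PSeq P (n + 1)
  | 0 => fun _ hF => base_subset_pStep P _ (Or.inl hF)
  | n + 1 => by
    refine pStep_mono ?_
    rintro _ ⟨Es, E0, rfl, h⟩
    exact ⟨Es, E0, rfl, h.mono (defaultExtension_pSeq P n).1 (pSeq_subset_succ P n)
      (defaultExtension_pSeq P (n + 1))⟩

/-- Only the objective parts of the minimal models of `P^n` influence `P^(n+1)`. They form a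
decreasing sequence of sets of valuations of finitely many atoms. -/
theorem exists_pSeq_eq_succ [Finite At] (P : Set (Clause At)) :
    ∃ n, PSeq P (n + 1) = PSeq P (n + 2) := by
  let O : ℕ → Set (At → Prop) := fun n => Interp.obj '' {M | IsMinModel (PSeq P n) M}
  have hO : ∀ n, O (n + 1) ⊆ O n := fun n => Set.image_mono fun M hM =>
    IsMinModel.of_subset (defaultExtension_pSeq P n).1 (pSeq_subset_succ P n)
      (defaultExtension_pSeq P (n + 1)) hM
  obtain ⟨n, hn⟩ := WellFoundedLT.antitone_chain_condition
    (antitone_nat_of_succ_le hO)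
  have hn' : O n = O (n + 1) := hn (n + 1) (Nat.le_succ n)
  have key : ∀ m Es E0, MinEntails (PSeq P m) (objImpl Es E0) ↔
      ∀ o ∈ O m, (∀ E ∈ Es, ¬ ∀ p ∈ E, o p) → ¬ ∀ p ∈ E0, o p := by
    intro m Es E0
    simp only [MinEntails, sat_objImpl, sat_conjAtoms, O, Set.forall_mem_image, Set.mem_ofPred_eq]
  refine ⟨n, ?_⟩
  have : derived (PSeq P n) = derived (PSeq P (n + 1)) := by
    ext F
    simp only [derived, key, hn', Set.mem_ofPred_eq]
  change CnStar _ = CnStar _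
  exact congrArg (fun D => CnStar (Clause.toFml '' P ∪ D)) this

/-! ### The sequence stays inside every static expansion -/

/-- In a theory closed under `CnNot`, minimal entailment of `¬E1 ∧ … ∧ ¬Em → ¬E0` yields
`not E1 ∧ … ∧ not Em → not E0`: with `H = E0 ∧ ¬E1 ∧ … ∧ ¬Em` and `D = E1 ∨ … ∨ Em`, the formula
`E0 ∨ (H ∨ D)` is equivalent to `H ∨ D`, and `not` turns disjunctions into conjunctions. -/
theorem derived_subset {T S : Set (Fml At)} (hS : CnClosed T S) (hA : assumed S ⊆ S) :
    derived S ⊆ S := by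
  obtain ⟨-, hf, ht, hd, hc, hi⟩ := hS
  rintro _ ⟨Es, E0, rfl, h⟩
  refine hc _ fun I hI => ?_
  intro hEs
  have hdisj : ∀ F G, I.dflt (Fml.disj F G) ↔ I.dflt F ∧ I.dflt G := fun F G => hI _ (hd F G)
  have hnt : ¬ I.dflt Fml.tru := hI _ ht
  rw [sat_conjList] at hEs
  have hEs' : ∀ E ∈ Es, I.dflt (conjAtoms E) := by
    intro E hE
    have := hEs _ (List.mem_map_of_mem hE)
    cases E with
    | nil => exact this.elim
    | cons p ps => exact this
  let D : List (List At) → Fml At :=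
    fun L => L.foldr (fun E F => Fml.disj (conjAtoms E) F) Fml.fls
  have hD : ∀ L : List (List At), (∀ E ∈ L, I.dflt (conjAtoms E)) → I.dflt (D L) := by
    intro L hL
    induction L with
    | nil => exact hI _ hf
    | cons E L ih =>
      exact (hdisj _ _).2 ⟨hL E (by simp), ih fun E' hE' => hL E' (by simp [hE'])⟩
  have hDsat : ∀ (J : Interp At) (L : List (List At)),
      J.sat (D L) ↔ ∃ E ∈ L, J.sat (conjAtoms E) := by
    intro J L
    induction L with
    | nil => simp [D, Interp.sat]
    | cons E L ih =>
      have : J.sat (D (E :: L)) ↔ J.sat (conjAtoms E) ∨ J.sat (D L) := Iff.rfl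
      rw [this, ih]
      simp
  let H : Fml At :=
    Fml.conj (conjAtoms E0) (conjList (Es.map (fun E => Fml.neg (conjAtoms E))))
  have hH : I.dflt H := by
    refine hI (Fml.not H) (hA ⟨H, fun M hM hMH => ?_, rfl⟩)
    exact h M hM hMH.2 hMH.1
  have hHD : I.dflt (Fml.disj H (D Es)) := (hdisj _ _).2 ⟨hH, hD Es hEs'⟩
  have heq : Fml.equiv (Fml.disj (conjAtoms E0) (Fml.disj H (D Es))) (Fml.disj H (D Es)) ∈ S := by
    refine hc _ fun J _ => ?_
    simp only [Interp.sat, H, hDsat, sat_conjList, List.forall_mem_map]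
    constructor
    · rintro (h0 | h1)
      · by_cases hex : ∃ E ∈ Es, J.sat (conjAtoms E)
        · exact Or.inr hex
        · exact Or.inl ⟨h0, fun E hE hJ => hex ⟨E, hE, hJ⟩⟩
      · exact h1
    · exact Or.inr
  have hE0 : I.dflt (conjAtoms E0) := ((hdisj _ _).1 ((hI _ (hi _ _ heq)).2 hHD)).1
  cases E0 with
  | nil => exact (hnt hE0).elim
  | cons p ps => exact hE0

theorem pSeq_subset_of_isStaticExpansion {P : Set (Clause At)} {X : Set (Fml At)}
    (hX : IsStaticExpansion (Clause.toFml '' P) X) (n : ℕ) : PSeq P n ⊆ X := by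
  have hX' : X = CnNot (Clause.toFml '' P ∪ assumed X) := hX
  have hcl : CnClosed (Clause.toFml '' P ∪ assumed X) X := by
    conv_rhs => rw [hX']
    exact cnClosed_cnNot _
  have hde : DefaultExtension (Clause.toFml '' P) X := by
    rw [hX']
    exact defaultExtension_cnNot _ _
  induction n with
  | zero => exact hde.1
  | succ n ih =>
    intro F hF
    refine hcl.2.2.2.2.1 F fun I hI => hF.2 I ?_
    rintro G (hG | ⟨Es, E0, rfl, h⟩)
    · exact hI G (hde.1 hG)
    · exact hI _ (derived_subset hcl (fun G hG => hcl.1 (Or.inr hG))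
        ⟨Es, E0, rfl, h.mono (defaultExtension_pSeq P n).1 ih hde⟩)

/-! ### A Kripke model over a fixed point -/

/-- Truth at the world `I` of the Kripke structure whose worlds are interpretations and whose
accessibility relation is `R`, reading `not F` as "`F` fails in all accessible worlds". -/
def ksat (R : Interp At → Interp At → Prop) : Fml At → Interp At → Prop
  | Fml.atom a, I => I.obj a
  | Fml.tru, _ => True
  | Fml.fls, _ => False
  | Fml.neg F, I => ¬ ksat R F I
  | Fml.conj F G, I => ksat R F I ∧ ksat R G I
  | Fml.disj F G, I => ksat R F I ∨ ksat R G I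
  | Fml.impl F G, I => ksat R F I → ksat R G I
  | Fml.equiv F G, I => (ksat R F I ↔ ksat R G I)
  | Fml.not F, I => ∀ M, R I M → ¬ ksat R F M

/-- The interpretation of `L_not` that the world `I` of the Kripke structure describes. -/
def kInterp (R : Interp At → Interp At → Prop) (I : Interp At) : Interp At :=
  ⟨I.obj, fun F => ∀ M, R I M → ¬ ksat R F M⟩

theorem sat_kInterp (R : Interp At → Interp At → Prop) (I : Interp At) (F : Fml At) :
    (kInterp R I).sat F ↔ ksat R F I := by
  induction F with
  | atom a => exact Iff.rfl
  | tru => exact Iff.rfl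
  | fls => exact Iff.rfl
  | neg F ih => simp only [Interp.sat, ksat, ih]
  | conj F G ih1 ih2 => simp only [Interp.sat, ksat, ih1, ih2]
  | disj F G ih1 ih2 => simp only [Interp.sat, ksat, ih1, ih2]
  | impl F G ih1 ih2 => simp only [Interp.sat, ksat, ih1, ih2]
  | equiv F G ih1 ih2 => simp only [Interp.sat, ksat, ih1, ih2]
  | not F ih => exact Iff.rfl

theorem ksat_conjAtoms (R : Interp At → Interp At → Prop) (I : Interp At) (E : List At) :
    ksat R (conjAtoms E) I ↔ I.sat (conjAtoms E) := by
  rw [← sat_kInterp, sat_conjAtoms, sat_conjAtoms]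
  exact Iff.rfl

/-- Accessibility for the theory `Q`: from `I` one sees those minimal models of `Q` that
falsify every conjunction `E` with `not E` true in `I`. -/
def Sees (Q : Set (Fml At)) (I M : Interp At) : Prop :=
  IsMinModel Q M ∧ ∀ E, I.sat (notConj E) → ¬ M.sat (conjAtoms E)

/-- If `Q` contains everything derived from it, a model of `Q` is given by the minimal models
accessible from it. For `E = []` this says that the accessibility relation is serial. -/
theorem forall_sees_iff [Finite At] {Q : Set (Fml At)} (hQ : derived Q ⊆ Q) {I : Interp At}
    (hI : I.satTheory Q) (E : List At) :
    (∀ M, Sees Q I M → ¬ M.sat (conjAtoms E)) ↔ I.sat (notConj E) := by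
  refine ⟨fun h => ?_, fun h M hM => hM.2 E h⟩
  -- One refuting conjunction for each of the finitely many objective valuations suffices.
  let B : Set (At → Prop) := {o | ∃ E', I.sat (notConj E') ∧ ∀ p ∈ E', o p}
  have hB : ∀ o : B, ∃ E', I.sat (notConj E') ∧ ∀ p ∈ E', o.1 p := fun o => o.2
  choose c hc1 hc2 using hB
  have hfin : (Set.range c).Finite := Set.finite_range c
  have hmem : ∀ E', E' ∈ hfin.toFinset.toList ↔ ∃ o, c o = E' := by simp
  have hder := hI _ (hQ ⟨hfin.toFinset.toList, E, rfl, fun M hM => sat_objImpl.2 fun hEs => ?_⟩)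
  · refine hder (sat_conjList.2 fun F hF => ?_)
    obtain ⟨E', hE', rfl⟩ := List.mem_map.1 hF
    obtain ⟨o, rfl⟩ := (hmem E').1 hE'
    exact hc1 o
  · refine h M ⟨hM, fun E' hE' hsat => ?_⟩
    have ho : M.obj ∈ B := ⟨E', hE', sat_conjAtoms.1 hsat⟩
    exact hEs (c ⟨M.obj, ho⟩) ((hmem _).2 ⟨_, rfl⟩) (sat_conjAtoms.2 (hc2 ⟨M.obj, ho⟩))

theorem sat_kInterp_notConj [Finite At] {Q : Set (Fml At)} (hQ : derived Q ⊆ Q) {I : Interp At}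
    (hI : I.satTheory Q) (E : List At) :
    (kInterp (Sees Q) I).sat (notConj E) ↔ I.sat (notConj E) := by
  cases E with
  | nil => exact Iff.rfl
  | cons p ps =>
    rw [← forall_sees_iff hQ hI]
    simp only [← ksat_conjAtoms (Sees Q)]
    exact Iff.rfl

/-- If a default extension `Q` of `P` contains everything derived from it, there is a static
expansion whose restriction to `L*_not` is satisfied by all models of `Q`: it lies below the theory of the Kripke structure. -/
theorem exists_isStaticExpansion_sat [Finite At] {P : Set (Clause At)} {Q : Set (Fml At)}
    (hQ : derived Q ⊆ Q) (hPQ : DefaultExtension (Clause.toFml '' P) Q) :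
    ∃ Y, IsStaticExpansion (Clause.toFml '' P) Y ∧
      ∀ F ∈ Y, LStar F → ∀ I : Interp At, I.satTheory Q → I.sat F := by
  set T := Clause.toFml '' P with hT
  let R := Sees Q
  let X : Set (Fml At) := {F | ∀ I : Interp At, I.satTheory Q → (kInterp R I).sat F}
  have hL : ∀ I : Interp At, I.satTheory Q → ∀ F, LStar F → ((kInterp R I).sat F ↔ I.sat F) :=
    fun I hI F hF => LStar.sat_congr (I := kInterp R I) (J := I) (fun _ => Iff.rfl)
      (sat_kInterp_notConj hQ hI) hF
  have hTX : T ⊆ X := by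
    rintro _ ⟨c, hc, rfl⟩ I hI
    exact (hL I hI _ (lStar_toFml c)).2 (hI _ (hPQ.1 ⟨c, hc, rfl⟩))
  let Z : Set (Fml At) := {F | IsDefault F ∧ F ∈ X}
  have hZX : Csq (T ∪ Z) ⊆ X := by
    intro F hF I hI
    refine hF _ ?_
    rintro G (hG | hG)
    · exact hTX hG I hI
    · exact hG.2 I hI
  -- The world of a minimal model of `Q` describes a minimal model of `Csq (T ∪ Z)`.
  have hmin : ∀ M, IsMinModel Q M → IsMinModel (Csq (T ∪ Z)) (kInterp R M) := by
    intro M hM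
    refine ⟨fun F hF => hZX hF M hM.1, fun N hN hs => ?_⟩
    refine hM.2 ⟨N.obj, M.dflt⟩ (hPQ.2 M _ hM.1 ?_ rfl) ⟨rfl, hs.2⟩
    rintro _ ⟨c, hc, rfl⟩
    refine (LStar.sat_congr (I := N) (J := ⟨N.obj, M.dflt⟩) (fun _ => Iff.rfl) (fun E => ?_)
      (lStar_toFml c)).1 (hN _ (subset_csq _ (Or.inl ⟨c, hc, rfl⟩)))
    calc N.sat (notConj E) ↔ (kInterp R M).sat (notConj E) :=
          ⟨isDefault_notConj E _ _ hs.1, isDefault_notConj E _ _ hs.1.symm⟩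
      _ ↔ M.sat (notConj E) := sat_kInterp_notConj hQ hM.1 E
      _ ↔ Interp.sat ⟨N.obj, M.dflt⟩ (notConj E) :=
          ⟨isDefault_notConj E _ _ rfl, isDefault_notConj E _ _ rfl⟩
  have hpre : CnNot (T ∪ assumed (Csq (T ∪ Z))) ⊆ Csq (T ∪ Z) := by
    refine cnNot_subset (cnClosed_csq (isDefault_of_mem_assumed _) ?_ ?_ ?_ ?_ ?_ hZX)
    · rintro _ ⟨F, hF, rfl⟩ I hI M hM hFM
      exact hF _ (hmin M hM.1) ((sat_kInterp R M F).2 hFM)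
    · exact fun I hI M hM h => h
    · intro I hI h
      exact (forall_sees_iff hQ hI []).1 fun M hM _ => h M hM trivial
    · intro F G I hI
      simp only [sat_kInterp, ksat, not_or]
      exact ⟨fun h => ⟨fun M hM => (h M hM).1, fun M hM => (h M hM).2⟩,
        fun h M hM => ⟨h.1 M hM, h.2 M hM⟩⟩
    · intro F G h I hI
      have h' : ∀ M, R I M → (ksat R F M ↔ ksat R G M) := fun M hM => by
        have := h M hM.1.1
        rwa [sat_kInterp] at this
      simp only [sat_kInterp, ksat]
      exact forall₂_congr fun M hM => not_congr (h' M hM)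
  obtain ⟨Y, hY, hYZ⟩ := exists_isStaticExpansion_subset (fun F (hF : F ∈ Z) => hF.1) hpre
    (fun F hF hd => ⟨hd, hZX hF⟩)
  exact ⟨Y, hY, fun F hF hFL I hI => (hL I hI F hFL).1 (hZX (hYZ hF) I hI)⟩

end Semantics

/-- Let `P` be a finite super logic program with least static expansion `Pbar`.
Then the sequence `(P^n)` is monotonically increasing, reaches a fixed point
`P^{n0} = P^{n0+1}`, and this fixed point equals the restriction of the least
static expansion of `P` to the language `L*_not`. -/
theorem pseq_fixedPoint_eq_restriction {At : Type} [Finite At]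
    (P : Set (Clause At)) (hPfin : P.Finite)
    (Pbar : Set (Fml At)) (hbar : IsLeastStaticExpansion (Clause.toFml '' P) Pbar) :
    (∀ n : ℕ, PSeq P n ⊆ PSeq P (n + 1)) ∧
    ∃ n0 : ℕ, PSeq P n0 = PSeq P (n0 + 1) ∧
      PSeq P n0 = Pbar ∩ {F : Fml At | LStar F} := by
  refine ⟨pSeq_subset_succ P, ?_⟩
  obtain ⟨n, hn⟩ := exists_pSeq_eq_succ P
  refine ⟨n + 1, hn, Set.Subset.antisymm
    (fun F hF => ⟨pSeq_subset_of_isStaticExpansion hbar.1 (n + 1) hF, hF.1⟩) ?_⟩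
  rintro F ⟨hF, hFL⟩
  have hQ : derived (PSeq P (n + 1)) ⊆ PSeq P (n + 1) := by
    conv_rhs => rw [hn]
    exact fun F hF => base_subset_pStep P _ (Or.inr hF)
  obtain ⟨Y, hY, hYs⟩ := exists_isStaticExpansion_sat hQ (defaultExtension_pSeq P (n + 1))
  exact ⟨hFL, fun I hI => hYs F (hbar.2 Y hY hF) hFL I (satTheory_pStep.2 hI)⟩
end

section
/- Let P be a propositional (ground) super logic program. Define F_0 := ∅, F_{i+1} := H_P(F_i), and let n be a natural number such that F_{n+1} = F_n. Then for every interpretation I (assigning truth values to all objective atoms and all default atoms not E): I is a minimal model of P if and only if I is a minimal model of F_n. -/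
/-!
The program `P` and the fixpoint `F = F_n` are related by two facts.

* Soundness: hyperresolution preserves models, so every model of `P` is a model of
  every `F_i` (`sat_FSeq_of_sat_prog`).
* A *minimal* model `I` of a set `F` closed under `H_P` is a model of `P`
  (`sat_prog_of_isMinModelF`): by minimality each true atom `b` is supported by a conditional
  fact of `F` with true body in whose head `b` is the only true atom. If the body of a clause
  is true in `I`, resolving the clause with the supports of its positive body atoms gives a
  fact of `F` with true body. The head atoms contributed by the supports are false, so the
  clause head is true.

Hence a minimal model of `F` is a minimal model of `P`. Conversely, if `I` is a minimal model
of `P` and some model `J` of `F` is properly smaller, there is a minimal model of `F` below `J`,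
by Zorn's lemma, as heads of conditional facts are finite (`exists_isMinModelF_le`). It is a
model of `P` properly smaller than `I`, a contradiction.
-/

/-- A finite nonempty conjunction (set) of objective atoms. -/
abbrev NEConj (At : Type) := {E : Finset At // E.Nonempty}

/-- A ground clause `A1 ∨ … ∨ Ak ← B1 ∧ … ∧ Bm ∧ not C1 ∧ … ∧ not Cn` of a
propositional super logic program: `head` is the set of head atoms, `posBody` the
set of positive body atoms, and `negBody` the set of conjunctions occurring under
default negation. -/
structure GClause (At : Type) where
  head : Finset At
  posBody : Finset At
  negBody : Finset (NEConj At)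

/-- A conditional fact `A ← C`: `head` is a finite set of objective atoms read
disjunctively (empty head read as `false`) and `body` a finite set of default atoms
`not E` read conjunctively (empty body read as `true`). -/
structure CondFact (At : Type) where
  head : Finset At
  body : Finset (NEConj At)

/-- Satisfaction of a ground clause by an interpretation `(Io, Id)` of the
objective and default atoms. -/
def satGClause {At : Type} (Io : At → Prop) (Id : NEConj At → Prop)
    (c : GClause At) : Prop :=
  ((∀ b ∈ c.posBody, Io b) ∧ (∀ C ∈ c.negBody, Id C)) → ∃ a ∈ c.head, Io a

/-- Satisfaction of a conditional fact by an interpretation `(Io, Id)`. -/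
def satCondFact {At : Type} (Io : At → Prop) (Id : NEConj At → Prop)
    (g : CondFact At) : Prop :=
  (∀ C ∈ g.body, Id C) → ∃ a ∈ g.head, Io a

/-- `(Io, Id)` is a minimal model of the program `P`: it is a model, and no model
agreeing with it on all default atoms has a properly smaller set of true
objective atoms. -/
def IsMinModelG {At : Type} (P : Set (GClause At)) (Io : At → Prop)
    (Id : NEConj At → Prop) : Prop :=
  (∀ c ∈ P, satGClause Io Id c) ∧
  ∀ Io' : At → Prop, (∀ c ∈ P, satGClause Io' Id c) →
    ¬ ({a | Io' a} ⊂ {a | Io a})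

/-- `(Io, Id)` is a minimal model of the set `F` of conditional facts. -/
def IsMinModelF {At : Type} (F : Set (CondFact At)) (Io : At → Prop)
    (Id : NEConj At → Prop) : Prop :=
  (∀ g ∈ F, satCondFact Io Id g) ∧
  ∀ Io' : At → Prop, (∀ g ∈ F, satCondFact Io' Id g) →
    ¬ ({a | Io' a} ⊂ {a | Io a})

/-- The hyperresolution operator `H_P`: from a clause of `P` and, for each positive
body atom `b`, a conditional fact of `F` whose head contains `b`, derive the
conditional fact whose head is the clause head together with the remaining head
atoms of the used conditional facts, and whose body collects the default atoms of
the clause and of the used conditional facts. -/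
def HypOp {At : Type} [DecidableEq At] (P : Set (GClause At))
    (F : Set (CondFact At)) : Set (CondFact At) :=
  {g | ∃ c ∈ P, ∃ sel : At → CondFact At,
    (∀ b ∈ c.posBody, sel b ∈ F ∧ b ∈ (sel b).head) ∧
    g.head = c.head ∪ c.posBody.biUnion (fun b => (sel b).head.erase b) ∧
    g.body = c.negBody ∪ c.posBody.biUnion (fun b => (sel b).body)}

/-- The sequence `F_0 = ∅`, `F_{i+1} = H_P(F_i)`. -/
def FSeq {At : Type} [DecidableEq At] (P : Set (GClause At)) : ℕ → Set (CondFact At)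
  | 0 => ∅
  | i + 1 => HypOp P (FSeq P i)

theorem sat_HypOp {At : Type} [DecidableEq At] {P : Set (GClause At)} {F : Set (CondFact At)}
    {Io : At → Prop} {Id : NEConj At → Prop} (hP : ∀ c ∈ P, satGClause Io Id c)
    (hF : ∀ g ∈ F, satCondFact Io Id g) : ∀ g ∈ HypOp P F, satCondFact Io Id g := by
  rintro g ⟨c, hc, sel, hsel, hh, hb⟩ hbody
  rw [hb] at hbody
  rw [hh]
  by_cases hpos : ∀ b ∈ c.posBody, Io b
  · obtain ⟨a, ha, hIa⟩ := hP c hc ⟨hpos, fun C hC => hbody C (Finset.mem_union_left _ hC)⟩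
    exact ⟨a, Finset.mem_union_left _ ha, hIa⟩
  · push Not at hpos
    obtain ⟨b, hbc, hIb⟩ := hpos
    -- The fact selected for the false atom `b` stays satisfied after erasing `b` from its head.
    obtain ⟨a, ha, hIa⟩ := hF _ (hsel b hbc).1 fun C hC =>
      hbody C (Finset.mem_union_right _ (Finset.mem_biUnion.2 ⟨b, hbc, hC⟩))
    have hab : a ≠ b := fun h => hIb (h ▸ hIa)
    exact ⟨a, Finset.mem_union_right _
      (Finset.mem_biUnion.2 ⟨b, hbc, Finset.mem_erase.2 ⟨hab, ha⟩⟩), hIa⟩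

theorem sat_FSeq_of_sat_prog {At : Type} [DecidableEq At] {P : Set (GClause At)}
    {Io : At → Prop} {Id : NEConj At → Prop} (hP : ∀ c ∈ P, satGClause Io Id c) (n : ℕ) :
    ∀ g ∈ FSeq P n, satCondFact Io Id g := by
  induction n with
  | zero => exact fun g hg => hg.elim
  | succ k ih => exact sat_HypOp hP ih

/-- Every atom true in a minimal model is supported: it is the only true head atom of some
conditional fact with true body. -/
theorem exists_support {At : Type} {F : Set (CondFact At)}
    {Io : At → Prop} {Id : NEConj At → Prop} (h : IsMinModelF F Io Id) {b : At} (hb : Io b) :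
    ∃ g ∈ F, b ∈ g.head ∧ (∀ C ∈ g.body, Id C) ∧ ∀ a ∈ g.head, Io a → a = b := by
  by_contra hcon
  push Not at hcon
  -- Otherwise making `b` false would give a smaller model.
  refine h.2 (fun a => Io a ∧ a ≠ b) (fun g hg hbody => ?_) ?_
  · obtain ⟨a, ha, hIa⟩ := h.1 g hg hbody
    by_cases hab : a = b
    · subst hab
      obtain ⟨a', ha', hIa', hne⟩ := hcon g hg ha hbody
      exact ⟨a', ha', hIa', hne⟩
    · exact ⟨a, ha, hIa, hab⟩
  · exact ⟨fun a ha => ha.1, fun hsub => (hsub (a := b) hb).2 rfl⟩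

theorem sat_prog_of_isMinModelF {At : Type} [DecidableEq At] {P : Set (GClause At)}
    {F : Set (CondFact At)} (hF : HypOp P F ⊆ F) {Io : At → Prop} {Id : NEConj At → Prop}
    (h : IsMinModelF F Io Id) : ∀ c ∈ P, satGClause Io Id c := by
  rintro c hc ⟨hpos, hneg⟩
  have hsup : ∀ b, ∃ g : CondFact At, b ∈ c.posBody →
      g ∈ F ∧ b ∈ g.head ∧ (∀ C ∈ g.body, Id C) ∧ ∀ a ∈ g.head, Io a → a = b := by
    intro b
    by_cases hb : b ∈ c.posBody
    · obtain ⟨g, hg⟩ := exists_support h (hpos b hb)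
      exact ⟨g, fun _ => hg⟩
    · exact ⟨⟨∅, ∅⟩, fun hb' => absurd hb' hb⟩
  choose sel hsel using hsup
  have hmem := hF (show (⟨c.head ∪ c.posBody.biUnion (fun b => (sel b).head.erase b),
      c.negBody ∪ c.posBody.biUnion (fun b => (sel b).body)⟩ : CondFact At) ∈ HypOp P F from
    ⟨c, hc, sel, fun b hb => ⟨(hsel b hb).1, (hsel b hb).2.1⟩, rfl, rfl⟩)
  obtain ⟨a, ha, hIa⟩ := h.1 _ hmem (by
    intro C hC
    rcases Finset.mem_union.1 hC with hC | hC
    · exact hneg C hC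
    · obtain ⟨b, hb, hCb⟩ := Finset.mem_biUnion.1 hC
      exact (hsel b hb).2.2.1 C hCb)
  rcases Finset.mem_union.1 ha with ha | ha
  · exact ⟨a, ha, hIa⟩
  · obtain ⟨b, hb, hab⟩ := Finset.mem_biUnion.1 ha
    obtain ⟨hne, hah⟩ := Finset.mem_erase.1 hab
    exact absurd ((hsel b hb).2.2.2 a hah hIa) hne

/-- A finite set disjoint from the intersection of a nonempty chain is disjoint from
some member of the chain. -/
theorem exists_mem_chain_avoiding {α : Type} {c : Set (Set α)} (hc : IsChain (· ⊆ ·) c)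
    (hne : c.Nonempty) (H : Finset α) (hH : ∀ a ∈ H, ∃ s ∈ c, a ∉ s) :
    ∃ s ∈ c, ∀ a ∈ H, a ∉ s := by
  classical
  induction H using Finset.induction_on with
  | empty =>
    obtain ⟨s, hs⟩ := hne
    exact ⟨s, hs, by simp⟩
  | insert x H _ ih =>
    obtain ⟨s, hs, hsH⟩ := ih fun a ha => hH a (Finset.mem_insert_of_mem ha)
    obtain ⟨t, ht, hxt⟩ := hH x (Finset.mem_insert_self _ _)
    rcases hc.total hs ht with hst | hts
    · refine ⟨s, hs, fun a ha => ?_⟩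
      rcases Finset.mem_insert.1 ha with rfl | ha
      · exact fun h => hxt (hst h)
      · exact hsH a ha
    · refine ⟨t, ht, fun a ha => ?_⟩
      rcases Finset.mem_insert.1 ha with rfl | ha
      · exact hxt
      · exact fun h => hsH a ha (hts h)

theorem exists_isMinModelF_le {At : Type} {F : Set (CondFact At)} {Io : At → Prop}
    {Id : NEConj At → Prop} (h : ∀ g ∈ F, satCondFact Io Id g) :
    ∃ M : At → Prop, IsMinModelF F M Id ∧ ∀ a, M a → Io a := by
  obtain ⟨m, hm, hmin⟩ := zorn_superset_nonempty
    {s : Set At | ∀ g ∈ F, satCondFact (· ∈ s) Id g} (by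
      intro c hcS hc hne
      refine ⟨⋂₀ c, fun g hg hbody => ?_, fun s hs => Set.sInter_subset_of_mem hs⟩
      by_contra hcon
      obtain ⟨s, hs, hav⟩ := exists_mem_chain_avoiding hc hne g.head (by
        intro a ha
        by_contra hall
        push Not at hall
        exact hcon ⟨a, ha, fun s hs => hall s hs⟩)
      obtain ⟨a, ha, has⟩ := hcS hs g hg hbody
      exact hav a ha has) {a | Io a} h
  refine ⟨(· ∈ m), ⟨hmin.prop, fun M' hM' hlt => ?_⟩, fun a ha => hm ha⟩
  exact hlt.2 (hmin.le_of_le (y := {a | M' a}) hM' hlt.1)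

/-- Let `P` be a propositional super logic program and `n` with `F_{n+1} = F_n`.
Then for every interpretation: it is a minimal model of `P` iff it is a minimal
model of `F_n`. -/
theorem minModel_prog_iff_hyperFix {At : Type} [DecidableEq At]
    (P : Set (GClause At)) (n : ℕ) (hfix : FSeq P (n + 1) = FSeq P n)
    (Io : At → Prop) (Id : NEConj At → Prop) :
    IsMinModelG P Io Id ↔ IsMinModelF (FSeq P n) Io Id := by
  have hcl : HypOp P (FSeq P n) ⊆ FSeq P n := hfix.le
  constructor
  · rintro ⟨hmod, hmin⟩
    refine ⟨sat_FSeq_of_sat_prog hmod n, fun J hJ hlt => ?_⟩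
    obtain ⟨M, hM, hMJ⟩ := exists_isMinModelF_le hJ
    exact hmin M (sat_prog_of_isMinModelF hcl hM)
      (lt_of_le_of_lt (show {a | M a} ⊆ {a | J a} from hMJ) hlt)
  · intro h
    exact ⟨sat_prog_of_isMinModelF hcl h, fun J hJ => h.2 J (sat_FSeq_of_sat_prog hJ n)⟩
end

section
/- Let D be a set of finite disjunctions of atoms that does not contain the empty disjunction and does not contain two disjunctions A and A' with A a proper subset of A'. Let I be a partial interpretation such that every atom interpreted as false by I does not appear in any disjunction of D, and every atom interpreted as true by I occurs as a one-element disjunction in D. Let p be an atom that appears in a disjunction p1 ∨ … ∨ p_{i-1} ∨ p ∨ p_{i+1} ∨ … ∨ pn of D containing at least one atom other than p. Then: (1) there is a minimal model of D that extends I and interprets p as false; and (2) there is a minimal model of D that extends I and interprets p as true and p1, …, p_{i-1}, p_{i+1}, …, pn as false. -/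
/-!
Two facts carry the proof. First, every model contains a minimal model: by Zorn's lemma, since
finiteness of the disjunctions makes the intersection of a chain of models a model
(`exists_isMinModelD_subset`). Second, every minimal model extends `I`: a unit disjunction `{a}`
forces `a` to be true, and an atom occurring in no disjunction can be removed from any model
(`IsMinModelD.extendsPartial`).

If `T` is a proper subset of `S`, no disjunction of `D` is contained in `T`, because it would be
properly contained in `S`; so the complement of `T` is a model of `D`, and it contains a minimal
model in which all atoms of `T` are false. Taking `T = {p}` gives the first claim. Taking
`T = S \ {p}` gives the second, as `p` is then the only atom left to satisfy `S`.
-/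

/-- `M` (a set of true atoms) is a model of the set `D` of disjunctions:
each disjunction contains at least one atom true in `M`. -/
def IsModelD {At : Type} (D : Set (Finset At)) (M : Set At) : Prop :=
  ∀ A ∈ D, ∃ a ∈ A, a ∈ M

/-- `M` is a minimal model of `D`. -/
def IsMinModelD {At : Type} (D : Set (Finset At)) (M : Set At) : Prop :=
  IsModelD D M ∧ ∀ M' : Set At, IsModelD D M' → ¬ M' ⊂ M

/-- The (total) interpretation with set of true atoms `M` extends the partial
interpretation `I`. -/
def ExtendsPartial {At : Type} (I : At → Option Bool) (M : Set At) : Prop :=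
  ∀ a : At, ∀ b : Bool, I a = some b → (a ∈ M ↔ b = true)

/-- Compactness along a chain of sets: if each element of a finite set is missed by some member
of the chain, a single member misses them all. -/
theorem exists_mem_chain_disjoint {At : Type} {c : Set (Set At)} (hc : IsChain (· ⊆ ·) c)
    (hne : c.Nonempty) (A : Finset At) (h : ∀ a ∈ A, ∃ s ∈ c, a ∉ s) :
    ∃ s ∈ c, ∀ a ∈ A, a ∉ s := by
  classical
  induction A using Finset.induction_on with
  | empty =>
    obtain ⟨s, hs⟩ := hne
    exact ⟨s, hs, by simp⟩
  | insert b B _ ih =>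
    obtain ⟨s, hs, hsB⟩ := ih fun a ha => h a (Finset.mem_insert_of_mem ha)
    obtain ⟨t, ht, htb⟩ := h b (Finset.mem_insert_self b B)
    rcases hc.total hs ht with hst | hts
    · refine ⟨s, hs, fun a ha => ?_⟩
      rcases Finset.mem_insert.mp ha with rfl | ha
      · exact fun has => htb (hst has)
      · exact hsB a ha
    · refine ⟨t, ht, fun a ha => ?_⟩
      rcases Finset.mem_insert.mp ha with rfl | ha
      · exact htb
      · exact fun hat => hsB a ha (hts hat)

theorem exists_isMinModelD_subset {At : Type} {D : Set (Finset At)} {N : Set At}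
    (hN : IsModelD D N) : ∃ M ⊆ N, IsMinModelD D M := by
  obtain ⟨M, hMN, hM⟩ := zorn_superset_nonempty {M | IsModelD D M} (by
    intro c hcD hc hne
    refine ⟨⋂₀ c, fun A hA => ?_, fun s hs => Set.sInter_subset_of_mem hs⟩
    by_contra! hcon
    obtain ⟨s, hs, hsA⟩ := exists_mem_chain_disjoint hc hne A fun a ha => by
      simpa [Set.mem_sInter] using hcon a ha
    obtain ⟨a, ha, has⟩ := hcD hs A hA
    exact hsA a ha has) N hN
  exact ⟨M, hMN, hM.prop, fun M' hM' hlt => hlt.not_subset (hM.le_of_le hM' hlt.subset)⟩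

theorem IsMinModelD.extendsPartial {At : Type} {D : Set (Finset At)} {M : Set At}
    (hM : IsMinModelD D M) {I : At → Option Bool}
    (hfalse : ∀ a : At, I a = some false → ∀ A ∈ D, a ∉ A)
    (htrue : ∀ a : At, I a = some true → {a} ∈ D) : ExtendsPartial I M := by
  rintro a (_ | _) hb
  · simp only [Bool.false_eq_true, iff_false]
    intro ha
    -- Otherwise `M \ {a}` would be a strictly smaller model.
    refine hM.2 (M \ {a}) (fun A hA => ?_) (Set.sdiff_singleton_ssubset.mpr ha)
    obtain ⟨x, hxA, hxM⟩ := hM.1 A hA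
    refine ⟨x, hxA, hxM, ?_⟩
    rintro rfl
    exact hfalse x hb A hA hxA
  · obtain ⟨x, hx, hxM⟩ := hM.1 _ (htrue a hb)
    rw [Finset.mem_singleton] at hx
    simpa [← hx] using hxM

theorem exists_isMinModelD_disjoint {At : Type} {D : Set (Finset At)}
    (hmin : ∀ A ∈ D, ∀ A' ∈ D, ¬ A ⊂ A') {S T : Finset At} (hS : S ∈ D) (hT : T ⊂ S) :
    ∃ M : Set At, IsMinModelD D M ∧ ∀ q ∈ T, q ∉ M := by
  have hmodel : IsModelD D {a | a ∉ T} := by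
    intro A hA
    by_contra! hcon
    have hAT : A ⊆ T := fun a ha => not_not.mp (hcon a ha)
    exact hmin A hA S hS (hAT.trans_ssubset hT)
  obtain ⟨M, hMT, hM⟩ := exists_isMinModelD_subset hmodel
  exact ⟨M, hM, fun q hq hqM => hMT hqM hq⟩

/-- Let `D` be a set of disjunctions of atoms not containing the empty disjunction
and not containing a disjunction properly included in another one.  Let `I` be a
partial interpretation such that atoms interpreted as false do not appear in `D`
and atoms interpreted as true appear as one-element disjunctions in `D`.  Let `p`
appear in a disjunction `S ∈ D` containing at least one atom other than `p`.
Then: (1) some minimal model of `D` extends `I` and makes `p` false; and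
(2) some minimal model of `D` extends `I`, makes `p` true, and makes all the other
atoms of `S` false. -/
theorem minModel_extension {At : Type} (D : Set (Finset At))
    (hempty : ∅ ∉ D)
    (hmin : ∀ A ∈ D, ∀ A' ∈ D, ¬ A ⊂ A')
    (I : At → Option Bool)
    (hfalse : ∀ a : At, I a = some false → ∀ A ∈ D, a ∉ A)
    (htrue : ∀ a : At, I a = some true → {a} ∈ D)
    (p : At) (S : Finset At) (hS : S ∈ D) (hp : p ∈ S)
    (hproper : ∃ q ∈ S, q ≠ p) :
    (∃ M : Set At, IsMinModelD D M ∧ ExtendsPartial I M ∧ p ∉ M) ∧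
    (∃ M : Set At, IsMinModelD D M ∧ ExtendsPartial I M ∧ p ∈ M ∧
      ∀ q ∈ S, q ≠ p → q ∉ M) := by
  classical
  constructor
  · have hT : {p} ⊂ S := by
      obtain ⟨q, hq, hqp⟩ := hproper
      exact (Finset.ssubset_iff_of_subset (Finset.singleton_subset_iff.mpr hp)).mpr
        ⟨q, hq, by simpa using hqp⟩
    obtain ⟨M, hM, hMT⟩ := exists_isMinModelD_disjoint hmin hS hT
    exact ⟨M, hM, hM.extendsPartial hfalse htrue, hMT p (Finset.mem_singleton_self p)⟩
  · obtain ⟨M, hM, hMT⟩ := exists_isMinModelD_disjoint hmin hS (Finset.erase_ssubset hp)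
    have hother : ∀ q ∈ S, q ≠ p → q ∉ M := fun q hq hqp =>
      hMT q (Finset.mem_erase.mpr ⟨hqp, hq⟩)
    refine ⟨M, hM, hM.extendsPartial hfalse htrue, ?_, hother⟩
    obtain ⟨a, haS, haM⟩ := hM.1 S hS
    have hap : a = p := by
      by_contra hap
      exact hother a haS hap haM
    exact hap ▸ haM
end
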